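/- arXiv:2511.11051 — 2 statements merged into one kernel-verified Lean document; each statement's English description precedes it below -/
import Mathlib

section
/- Let C be an m×n real matrix, V an n×k real matrix with orthonormal columns (VᵀV = I_k), P = VVᵀ, and μ ≥ 0 a real number. Define the objective f(X) = ∑_{i,j} (X_{ij} − C_{ij})² + μ·trace(X·P·Xᵀ) over m×n real matrices X, and set X* = C·(I − (μ/(1+μ))·P). Then X* minimizes f: for every m×n real matrix X, f(X*) ≤ f(X). -/
open Matrix

/-- The Tikhonov-regularized objective
`f(X) = ∑_{i,j} (X_{ij} − C_{ij})² + μ·trace(X·P·Xᵀ)`. -/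
noncomputable def tikhonovObjective (m n : ℕ) (C : Matrix (Fin m) (Fin n) ℝ)
    (P : Matrix (Fin n) (Fin n) ℝ) (μ : ℝ) (X : Matrix (Fin m) (Fin n) ℝ) : ℝ :=
  (∑ i, ∑ j, (X i j - C i j) ^ 2) + μ * Matrix.trace (X * P * Xᵀ)

theorem soft_projection_minimizes_objective
    (m n k : ℕ) (C : Matrix (Fin m) (Fin n) ℝ) (V : Matrix (Fin n) (Fin k) ℝ)
    (hV : Vᵀ * V = 1) (μ : ℝ) (hμ : 0 ≤ μ) :
    ∀ X : Matrix (Fin m) (Fin n) ℝ,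
      tikhonovObjective m n C (V * Vᵀ) μ (C * (1 - (μ / (1 + μ)) • (V * Vᵀ))) ≤
        tikhonovObjective m n C (V * Vᵀ) μ X := by
  intro X
  have hS : ∀ A : Matrix (Fin m) (Fin n) ℝ, ∑ i, ∑ j, (A i j) ^ 2 = Matrix.trace (A * Aᵀ) := by
    intro A
    simp [Matrix.trace, Matrix.mul_apply, pow_two]
  have hf : ∀ A : Matrix (Fin m) (Fin n) ℝ, tikhonovObjective m n C (V * Vᵀ) μ A =
      Matrix.trace ((A - C) * (A - C)ᵀ) + μ * Matrix.trace (A * (V * Vᵀ) * Aᵀ) := by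
    intro A
    rw [← hS]
    simp [tikhonovObjective]
  have hPP : (V * Vᵀ) * (V * Vᵀ) = V * Vᵀ := by
    rw [Matrix.mul_assoc, ← Matrix.mul_assoc Vᵀ, hV, Matrix.one_mul]
  have hPT : (V * Vᵀ)ᵀ = V * Vᵀ := by simp
  have hnn : ∀ D : Matrix (Fin m) (Fin n) ℝ, 0 ≤ Matrix.trace (D * (V * Vᵀ) * Dᵀ) := by
    intro D
    have : D * (V * Vᵀ) * Dᵀ = (D * V) * (D * V)ᵀ := by
      simp [Matrix.mul_assoc]
    rw [this]
    simp only [Matrix.trace, Matrix.mul_apply, Matrix.diag_apply, Matrix.transpose_apply]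
    exact Finset.sum_nonneg fun i _ => Finset.sum_nonneg fun j _ => mul_self_nonneg _
  have hnn1 : ∀ D : Matrix (Fin m) (Fin n) ℝ, 0 ≤ Matrix.trace (D * Dᵀ) := by
    intro D
    rw [← hS]
    positivity
  rw [hf, hf]
  generalize V * Vᵀ = P at *
  have hY : (C * (1 - (μ / (1 + μ)) • P) - C) + μ • (C * (1 - (μ / (1 + μ)) • P) * P) = 0 := by
    have h1 : (1 + μ) ≠ 0 := by positivity
    rw [Matrix.mul_assoc, Matrix.sub_mul, Matrix.smul_mul, hPP, Matrix.one_mul, Matrix.mul_sub,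
      Matrix.mul_sub, Matrix.mul_smul, Matrix.mul_one]
    ext i j
    simp
    field_simp
    ring
  generalize C * (1 - (μ / (1 + μ)) • P) = Y at *
  obtain ⟨D, rfl⟩ : ∃ D, X = Y + D := ⟨X - Y, by simp⟩
  have e1 : Matrix.trace ((Y + D - C) * (Y + D - C)ᵀ) = Matrix.trace ((Y - C) * (Y - C)ᵀ)
      + 2 * Matrix.trace ((Y - C) * Dᵀ) + Matrix.trace (D * Dᵀ) := by
    have : Matrix.trace (D * (Y - C)ᵀ) = Matrix.trace ((Y - C) * Dᵀ) := by
      rw [← Matrix.trace_transpose, Matrix.transpose_mul, Matrix.transpose_transpose]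
    rw [show Y + D - C = (Y - C) + D by abel, Matrix.transpose_add, Matrix.add_mul,
      Matrix.mul_add, Matrix.mul_add]
    simp only [Matrix.trace_add, this]
    ring
  have e2 : Matrix.trace ((Y + D) * P * (Y + D)ᵀ) = Matrix.trace (Y * P * Yᵀ)
      + 2 * Matrix.trace (Y * P * Dᵀ) + Matrix.trace (D * P * Dᵀ) := by
    have : Matrix.trace (D * P * Yᵀ) = Matrix.trace (Y * P * Dᵀ) := by
      rw [← Matrix.trace_transpose, Matrix.transpose_mul, Matrix.transpose_mul,
        Matrix.transpose_transpose, hPT, Matrix.mul_assoc]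
    rw [Matrix.transpose_add, Matrix.add_mul, Matrix.add_mul, Matrix.mul_add, Matrix.mul_add]
    simp only [Matrix.trace_add, this]
    ring
  have e3 : Matrix.trace ((Y - C) * Dᵀ) + μ * Matrix.trace (Y * P * Dᵀ) = 0 := by
    have := congrArg (fun Z => Matrix.trace (Z * Dᵀ)) hY
    simpa only [Matrix.add_mul, Matrix.smul_mul, Matrix.trace_add, Matrix.trace_smul,
      smul_eq_mul, Matrix.zero_mul, Matrix.trace_zero] using this
  rw [e1, e2]
  nlinarith [hnn1 D, mul_nonneg hμ (hnn D)]
end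

section
/- Let C be an m×n real matrix, V an n×k real matrix with orthonormal columns (VᵀV = I_k), P = VVᵀ, and μ ≥ 0 a real number. The minimizer X* = C·(I − (μ/(1+μ))·P) of the objective f(X) = ∑_{i,j} (X_{ij} − C_{ij})² + μ·trace(X·P·Xᵀ) is unique: for every m×n real matrix X with X ≠ X*, f(X*) < f(X). -/
open Matrix

theorem soft_projection_unique_minimizer
    (m n k : ℕ) (C : Matrix (Fin m) (Fin n) ℝ) (V : Matrix (Fin n) (Fin k) ℝ)
    (hV : Vᵀ * V = 1) (μ : ℝ) (hμ : 0 ≤ μ) :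
    ∀ X : Matrix (Fin m) (Fin n) ℝ, X ≠ C * (1 - (μ / (1 + μ)) • (V * Vᵀ)) →
      tikhonovObjective m n C (V * Vᵀ) μ (C * (1 - (μ / (1 + μ)) • (V * Vᵀ))) <
        tikhonovObjective m n C (V * Vᵀ) μ X := by
  intro X hX
  set P := V * Vᵀ with hP
  set a := μ / (1 + μ) with ha
  set S := C * (1 - a • P) with hS
  have hPP : P * P = P := by
    rw [hP, Matrix.mul_assoc, ← Matrix.mul_assoc Vᵀ, hV, Matrix.one_mul]
  have hPT : Pᵀ = P := by
    rw [hP, Matrix.transpose_mul, Matrix.transpose_transpose]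
  have h1 : (1 + μ) ≠ 0 := by positivity
  have hSP : S * P = (1 - a) • (C * P) := by
    rw [hS, Matrix.mul_assoc, Matrix.sub_mul, Matrix.one_mul, Matrix.smul_mul, hPP,
      Matrix.mul_sub, Matrix.mul_smul, sub_smul, one_smul]
  have haa : μ * (1 - a) = a := by
    rw [ha]; field_simp; ring
  have hgrad : S - C = -(μ • (S * P)) := by
    rw [hSP, smul_smul, haa, hS, Matrix.mul_sub, Matrix.mul_one, Matrix.mul_smul]
    abel
  have hsq : ∀ Y : Matrix (Fin m) (Fin n) ℝ,
      ∑ i, ∑ j, (Y i j) ^ 2 = Matrix.trace (Y * Yᵀ) := by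
    intro Y
    simp [Matrix.trace, Matrix.mul_apply, pow_two]
  have hf : ∀ Y : Matrix (Fin m) (Fin n) ℝ, tikhonovObjective m n C P μ Y
      = Matrix.trace ((Y - C) * (Y - C)ᵀ) + μ * Matrix.trace (Y * P * Yᵀ) := by
    intro Y
    rw [← hsq]
    rfl
  obtain ⟨D, rfl⟩ : ∃ D, X = S + D := ⟨X - S, by abel⟩
  have hD : D ≠ 0 := by
    rintro rfl
    exact hX (add_zero S)
  have hpos : 0 < Matrix.trace (D * Dᵀ) := by
    rw [← hsq]
    obtain ⟨i, j, hij⟩ : ∃ i j, D i j ≠ 0 := by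
      by_contra! h
      exact hD (by ext i j; exact h i j)
    refine Finset.sum_pos' (fun i _ => Finset.sum_nonneg fun j _ => sq_nonneg _)
      ⟨i, Finset.mem_univ i, ?_⟩
    exact Finset.sum_pos' (fun j _ => sq_nonneg _) ⟨j, Finset.mem_univ j, by positivity⟩
  have hnn : 0 ≤ Matrix.trace (D * P * Dᵀ) := by
    have : D * P * Dᵀ = (D * P) * (D * P)ᵀ := by
      rw [Matrix.transpose_mul, hPT, ← Matrix.mul_assoc (D * P) P Dᵀ, Matrix.mul_assoc D P P, hPP]
    rw [this, ← hsq]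
    exact Finset.sum_nonneg fun i _ => Finset.sum_nonneg fun j _ => sq_nonneg _
  have hsym : Matrix.trace (D * P * Sᵀ) = Matrix.trace (S * P * Dᵀ) := by
    rw [← Matrix.trace_transpose]
    simp only [Matrix.transpose_mul, Matrix.transpose_transpose, hPT, Matrix.mul_assoc]
  have hsym2 : Matrix.trace (D * (S - C)ᵀ) = Matrix.trace ((S - C) * Dᵀ) := by
    rw [← Matrix.trace_transpose]
    simp only [Matrix.transpose_mul, Matrix.transpose_transpose]
  have hcross : Matrix.trace ((S - C) * Dᵀ) = -(μ * Matrix.trace (S * P * Dᵀ)) := by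
    rw [hgrad, Matrix.neg_mul, Matrix.smul_mul, Matrix.trace_neg, Matrix.trace_smul, smul_eq_mul]
  have e1 : Matrix.trace ((S + D - C) * (S + D - C)ᵀ) = Matrix.trace ((S - C) * (S - C)ᵀ)
      + Matrix.trace ((S - C) * Dᵀ) + Matrix.trace (D * (S - C)ᵀ) + Matrix.trace (D * Dᵀ) := by
    rw [show S + D - C = (S - C) + D by abel, Matrix.transpose_add, Matrix.add_mul,
      Matrix.mul_add, Matrix.mul_add]
    simp only [Matrix.trace_add]
    ring
  have e2 : Matrix.trace ((S + D) * P * (S + D)ᵀ) = Matrix.trace (S * P * Sᵀ)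
      + Matrix.trace (S * P * Dᵀ) + Matrix.trace (D * P * Sᵀ) + Matrix.trace (D * P * Dᵀ) := by
    rw [Matrix.transpose_add, Matrix.add_mul, Matrix.add_mul, Matrix.mul_add, Matrix.mul_add]
    simp only [Matrix.trace_add]
    ring
  rw [hf, hf, e1, e2, hsym, hsym2, hcross]
  nlinarith [mul_nonneg hμ hnn]
end
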